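/- arXiv:1907.08185 — 2 statements merged into one kernel-verified Lean document; each statement's English description precedes it below -/
import Mathlib

section
/- Let d be a positive integer and let w₀, w₁, …, w_d be positive integers. For each i ∈ {1,…,d}, let S_{i,1}, …, S_{i,w_i} be subsets of {1,…,w_{i−1}} such that the family of layer i satisfies the following sampler property: for every real η with 0 < η ≤ 1/10 and every x ∈ {0,1}^{w_{i−1}} with x̄ ≥ 1 − η, the fraction of indices j ∈ {1,…,w_i} with avg(x|_{S_{i,j}}) < 4/5 is at most η/2. Let y₀ ∈ {0,1}^{w₀} be any string with ȳ₀ ≥ 9/10, and define recursively y_i ∈ {0,1}^{w_i} by (y_i)_j = 1 iff avg(y_{i−1}|_{S_{i,j}}) ≥ 4/5. Then for every i ∈ {0,1,…,d}, ȳ_i ≥ 1 − 2^{−i}/10. -/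
/-!
A position `j` of layer `i` is zero exactly when the sampler fails on `S i j`, that is, when
`avgOn (y (i - 1)) (S i j) < 4 / 5`. So `fracOn (y i) (w i)` is one minus the fraction of failing
indices (`fracOn_eq_one_sub`). If the fraction of zeros in layer `i - 1` is at most
`η = 2 ^ (-(i - 1)) / 10 ≤ 1 / 10`, the sampler property bounds the fraction of zeros in layer `i`
by `η / 2`, and the bound follows by induction on the layer.
-/

open Finset

/-- The fraction of ones in the bits of `x : ℕ → Bool` indexed by the finite set `S`. -/
noncomputable def avgOn (x : ℕ → Bool) (S : Finset ℕ) : ℝ :=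
  (∑ i ∈ S, if x i then (1 : ℝ) else 0) / S.card

/-- The fraction of ones among the first `W` bits of `x : ℕ → Bool`. -/
noncomputable def fracOn (x : ℕ → Bool) (W : ℕ) : ℝ :=
  (∑ i ∈ Finset.range W, if x i then (1 : ℝ) else 0) / W

open Classical in
/-- If the zeros of `x` among the first `W` positions are exactly those satisfying `p`, the fraction
of ones is the complement of the density of `p`. -/
theorem fracOn_eq_one_sub (x : ℕ → Bool) (W : ℕ) (hW : 0 < W) (p : ℕ → Prop)
    (hp : ∀ j < W, (x j = true ↔ ¬ p j)) :
    fracOn x W = 1 - (((Finset.range W).filter p).card : ℝ) / W := by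
  have hW' : (W : ℝ) ≠ 0 := by positivity
  have hsum : (∑ j ∈ Finset.range W, if x j then (1 : ℝ) else 0)
      = W - (((Finset.range W).filter p).card : ℝ) := by
    have hcongr : (∑ j ∈ Finset.range W, if x j then (1 : ℝ) else 0)
        = ∑ j ∈ Finset.range W, ((1 : ℝ) - if p j then 1 else 0) := by
      refine Finset.sum_congr rfl fun j hj => ?_
      have h := hp j (Finset.mem_range.mp hj)
      by_cases hj' : p j <;> simp_all
    rw [hcongr, Finset.sum_sub_distrib, Finset.sum_boole]
    simp
  rw [fracOn, hsum, sub_div, div_self hW']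

open Classical in
theorem stmt_3 (d : ℕ) (hd : 0 < d) (w : ℕ → ℕ) (hw : ∀ i ≤ d, 0 < w i)
    (S : ℕ → ℕ → Finset ℕ)
    (hSsub : ∀ i, 1 ≤ i → i ≤ d → ∀ j < w i, S i j ⊆ Finset.range (w (i - 1)))
    (hsampler : ∀ i, 1 ≤ i → i ≤ d → ∀ η : ℝ, 0 < η → η ≤ 1 / 10 →
      ∀ x : ℕ → Bool, 1 - η ≤ fracOn x (w (i - 1)) →
        (((Finset.range (w i)).filter (fun j => avgOn x (S i j) < 4 / 5)).card : ℝ)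
          / ((w i : ℕ) : ℝ) ≤ η / 2)
    (y : ℕ → ℕ → Bool)
    (hy0 : 9 / 10 ≤ fracOn (y 0) (w 0))
    (hyrec : ∀ i, 1 ≤ i → i ≤ d → ∀ j < w i,
      (y i j = true ↔ (4 : ℝ) / 5 ≤ avgOn (y (i - 1)) (S i j))) :
    ∀ i ≤ d, 1 - ((1 : ℝ) / 2) ^ i / 10 ≤ fracOn (y i) (w i) := by
  intro i
  induction i with
  | zero => intro _; norm_num; linarith
  | succ i ih =>
    intro hi
    have hprev := ih (by omega)
    have hη : ((1 : ℝ) / 2) ^ i ≤ 1 := pow_le_one₀ (by norm_num) (by norm_num)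
    have hbad := hsampler (i + 1) (by omega) hi (((1 : ℝ) / 2) ^ i / 10) (by positivity)
      (by linarith) (y i) hprev
    have hrec : ∀ j < w (i + 1),
        (y (i + 1) j = true ↔ ¬ avgOn (y i) (S (i + 1) j) < 4 / 5) := by
      intro j hj
      rw [not_lt]
      exact hyrec (i + 1) (by omega) hi j hj
    rw [fracOn_eq_one_sub _ _ (hw _ hi) _ hrec, pow_succ]
    linarith
end

section
/- There exist a positive integer C and a positive integer m₀ such that for every integer d ≥ 1 with m = 2^d ≥ m₀ the following holds: for each i ∈ {1,…,d} there exist subsets S_{i,1}, …, S_{i,m/2^i} of {1,…,m/2^{i−1}}, each of cardinality at most C, such that, defining the layer maps F_i : {0,1}^{m/2^{i−1}} → {0,1}^{m/2^i} by (F_i(y))_j = 1 iff avg(y|_{S_{i,j}}) ≥ 4/5, the following two properties hold: (a) for every x ∈ {0,1}^m with x̄ ≥ 9/10 and every i ∈ {1,…,d}, the string y_i = F_i(F_{i−1}(⋯F_1(x)⋯)) satisfies ȳ_i ≥ 1 − 2^{−i}/10; in particular, since the top layer has a single gate, the single output bit y_d equals 1; (b) for every i ∈ {1,…,d} and every y ∈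 {0,1}^{m/2^{i−1}} with ȳ ≤ 7/10, the string F_i(y) has fraction of ones at most 6/10. -/
/-!
A single layer is built by the probabilistic method; the circuit stacks one such layer for each
input width `2 ^ (k + 1)`.

*The random layer.* Let `D = 2048`, and split the `D * M` inputs of a layer into `D` blocks of
size `M`. Each of the `g = D * M / 2` gates reads one uniformly random input from every block, so
its fan-in is exactly `D` and it never reads an input twice. For a set `Z` of inputs carrying a
zero, the number of zeros read by a gate (`hits`) is a sum of independent indicators, and
`sum_pow_hits_le` bounds its moment generating function. A gate outputs `1` iff it reads at most
`409` zeros.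

*Union bound.* `exists_graph` excludes two kinds of bad pairs `(Z, B)` with `B` a set of gates:
* `|Z| = 4 |B|`, `|Z| ≤ 0.11 D M`, and every gate of `B` outputs `0`. With
  `u = 5 |Z| / (D M)`, one gate outputs `0` with probability at most `(u e ^ (1 - u)) ^ 410`
  (`card_many_hits_le`), which beats the number of choices of `(Z, B)` since
  `u e ^ (1 - u) ≤ 0.91` (`peak_pow_le`).
* `|Z| ≥ 0.3 D M`, `|B| ≥ g / 2`, and every gate of `B` outputs `1`. One gate does so with
  probability at most `2⁻¹⁰` (`card_few_hits_le`), against at most `8 ^ g` pairs.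

Hence some layer sends any `z ≤ D M / 10` zeros to at most `z / 4` zeros, and any input with at
least 30% zeros to an output with at most 60% ones. For widths below `2048` every gate reads all
inputs, which trivially has both properties (`exists_layer`).

*Stacking.* Dividing the number of zeros by four while the width halves halves the fraction of
zeros, which gives completeness; soundness is a property of each layer.
-/

open Finset

/-! ### Exponential moments of the number of hits -/

/-- The number of elements of `Z` read by a gate that selects the element `f t` in block `t`; an
input is a pair (block, position in the block). -/
def hits {D M : ℕ} (Z : Finset (Fin D × Fin M)) (f : Fin D → Fin M) : ℕ :=
  (univ.filter fun t => (t, f t) ∈ Z).card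

/-- Moment generating function of `hits Z f` for a uniformly random `f`, multiplied by the number
`M ^ D` of all `f`. The sum factors over the blocks, and each factor is bounded by
`1 + x ≤ exp x`. -/
theorem sum_pow_hits_le {D M : ℕ} (hM : 0 < M) (Z : Finset (Fin D × Fin M)) {a : ℝ}
    (ha : 0 ≤ a) :
    ∑ f : Fin D → Fin M, a ^ hits Z f ≤ (M : ℝ) ^ D * Real.exp ((a - 1) * Z.card / M) := by
  have hM' : (0 : ℝ) < M := by exact_mod_cast hM
  have h1 : ∀ f : Fin D → Fin M,
      a ^ hits Z f = ∏ t, (fun t v => if (t, v) ∈ Z then a else 1) t (f t) := by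
    intro f
    simp only [hits]
    rw [Finset.prod_ite]
    simp
  have h2 : ∀ t : Fin D, ∑ v : Fin M, (if (t, v) ∈ Z then a else 1)
      ≤ M * Real.exp ((a - 1) * (∑ v : Fin M, if (t, v) ∈ Z then (1 : ℝ) else 0) / M) := by
    intro t
    have : ∑ v : Fin M, (if (t, v) ∈ Z then a else 1)
        = M + (a - 1) * ∑ v : Fin M, if (t, v) ∈ Z then (1 : ℝ) else 0 := by
      have : ∀ v : Fin M, (if (t, v) ∈ Z then a else 1)
          = 1 + (a - 1) * (if (t, v) ∈ Z then (1 : ℝ) else 0) := by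
        intro v; split_ifs <;> ring
      simp_rw [this, sum_add_distrib, ← mul_sum]
      simp
    rw [this]
    set s := ∑ v : Fin M, if (t, v) ∈ Z then (1 : ℝ) else 0
    calc M + (a - 1) * s = M * ((a - 1) * s / M + 1) := by field_simp; ring
      _ ≤ _ := mul_le_mul_of_nonneg_left (Real.add_one_le_exp _) hM'.le
  have h3 : ∑ t : Fin D, ∑ v : Fin M, (if (t, v) ∈ Z then (1 : ℝ) else 0) = Z.card := by
    rw [← Fintype.sum_prod_type (fun p : Fin D × Fin M => if p ∈ Z then (1 : ℝ) else 0)]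
    simp
  calc ∑ f : Fin D → Fin M, a ^ hits Z f
      = ∏ t, ∑ v : Fin M, (if (t, v) ∈ Z then a else 1) := by
        simp_rw [h1]
        rw [Finset.prod_univ_sum]
        simp
    _ ≤ ∏ t, (M * Real.exp ((a - 1) * (∑ v : Fin M, if (t, v) ∈ Z then (1 : ℝ) else 0) / M)) :=
        prod_le_prod (fun t _ => sum_nonneg fun v _ => by split_ifs <;> positivity)
          (fun t _ => h2 t)
    _ = _ := by
        rw [prod_mul_distrib, ← Real.exp_sum, ← sum_div, ← mul_sum, h3]
        simp

/-! ### Union bound and numerical estimates -/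

/-- Union bound for `g` independent uniform elements of `E`: the `i`-th event, that all
coordinates in `B i` fall into `A i`, has probability `(|A i| / |E|) ^ |B i|`. -/
theorem exists_avoiding {ι E : Type*} [Fintype E] [DecidableEq E] [Nonempty E] {g : ℕ}
    (I : Finset ι) (A : ι → Finset E) (B : ι → Finset (Fin g))
    (h : ∑ i ∈ I, ((A i).card / Fintype.card E : ℝ) ^ (B i).card < 1) :
    ∃ ω : Fin g → E, ∀ i ∈ I, ∃ j ∈ B i, ω j ∉ A i := by
  by_contra! hc
  have hT : (0 : ℝ) < Fintype.card E := by exact_mod_cast Fintype.card_pos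
  let P : ι → Finset (Fin g → E) := fun i => Fintype.piFinset fun j => if j ∈ B i then A i else univ
  have hP : ∀ i, ((P i).card : ℝ)
      = ((A i).card / Fintype.card E : ℝ) ^ (B i).card * (Fintype.card E : ℝ) ^ g := by
    intro i
    have : ∀ j, (((if j ∈ B i then A i else univ : Finset E).card : ℕ) : ℝ)
        = (if j ∈ B i then ((A i).card / Fintype.card E : ℝ) else 1) * Fintype.card E := by
      intro j
      split_ifs
      · field_simp
      · simp
    simp only [P, Fintype.card_piFinset, Nat.cast_prod, this, prod_mul_distrib]
    rw [Finset.prod_ite]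
    simp [div_pow]
  have hcov : (univ : Finset (Fin g → E)) ⊆ by classical exact I.biUnion P := by
    intro ω _
    obtain ⟨i, hi, hω⟩ := hc ω
    simp only [mem_biUnion]
    refine ⟨i, hi, ?_⟩
    simp only [P, Fintype.mem_piFinset]
    intro j
    split_ifs with hj
    · exact hω j hj
    · simp
  have h1 : ((univ : Finset (Fin g → E)).card : ℝ) ≤ ∑ i ∈ I, ((P i).card : ℝ) := by
    have := (card_le_card hcov).trans (card_biUnion_le)
    exact_mod_cast this
  simp_rw [hP, ← sum_mul] at h1
  have h2 : ((univ : Finset (Fin g → E)).card : ℝ) = (Fintype.card E : ℝ) ^ g := by simp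
  rw [h2] at h1
  have : (0 : ℝ) < (Fintype.card E : ℝ) ^ g := by positivity
  nlinarith

theorem choose_le_exp (n k : ℕ) (hk : 0 < k) :
    (n.choose k : ℝ) ≤ (Real.exp 1 * n / k) ^ k := by
  have hk' : (0 : ℝ) < k := by exact_mod_cast hk
  have h1 : (n.choose k : ℝ) ≤ (n : ℝ) ^ k / k.factorial := Nat.choose_le_pow_div k n
  have h2 : (k : ℝ) ^ k / k.factorial ≤ Real.exp k := Real.pow_div_factorial_le_exp _ hk'.le k
  refine h1.trans ?_
  rw [div_pow, mul_pow, ← Real.exp_nat_mul, mul_one]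
  rw [le_div_iff₀ (by positivity)]
  calc (n : ℝ) ^ k / k.factorial * k ^ k = (k : ℝ) ^ k / k.factorial * n ^ k := by ring
    _ ≤ _ := by gcongr

theorem peak_le {u : ℝ} (h0 : 0 < u) (h1 : u ≤ 11 / 20) :
    u * Real.exp (1 - u) ≤ 91 / 100 := by
  have he : Real.exp (1 / 2) ≤ 33 / 20 := by
    have h : Real.exp (1 / 2) ^ 2 = Real.exp 1 := by rw [← Real.exp_nat_mul]; norm_num
    have := Real.exp_one_lt_d9
    have := Real.exp_pos (1 / 2)
    nlinarith
  -- tangent line of `exp` at the endpoint `u = 11 / 20`, where `u * exp (1 - u)` is largest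
  have h2 : u ≤ 11 / 20 * Real.exp (u * 20 / 11 - 1) := by
    have := Real.add_one_le_exp (u * 20 / 11 - 1)
    linarith
  calc u * Real.exp (1 - u) ≤ 11 / 20 * Real.exp (u * 20 / 11 - 1) * Real.exp (1 - u) := by gcongr
    _ = 11 / 20 * Real.exp (u * 9 / 11) := by rw [mul_assoc, ← Real.exp_add]; ring_nf
    _ ≤ 11 / 20 * Real.exp (1 / 2) :=
        mul_le_mul_of_nonneg_left (Real.exp_le_exp.2 (by linarith)) (by norm_num)
    _ ≤ _ := by linarith

set_option exponentiation.threshold 1000 in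
/-- The per-gate factor in the union bound over pairs `(Z, B)` with `|Z| = 4 |B|`: here
`u = 5 |Z| / n` for width `n`, and the first two factors come from the numbers of choices of `Z`
and `B`. -/
theorem peak_pow_le {u : ℝ} (h0 : 0 < u) (h1 : u ≤ 11 / 20) :
    (5 * Real.exp 1 / u) ^ 4 * (10 * Real.exp 1 / u) * (u * Real.exp (1 - u)) ^ 410 ≤ 1 / 4 := by
  set v := u * Real.exp (1 - u) with hv
  have hv0 : 0 < v := by positivity
  have hv1 : v ≤ 91 / 100 := peak_le h0 h1
  have h3 : Real.exp 1 / u * v ≤ 9 := by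
    have : Real.exp 1 / u * v = Real.exp 1 * Real.exp (1 - u) := by rw [hv]; field_simp
    rw [this]
    have e1 : Real.exp 1 ≤ 3 := by linarith [Real.exp_one_lt_d9]
    have e2 : Real.exp (1 - u) ≤ Real.exp 1 := Real.exp_le_exp.2 (by linarith)
    nlinarith [Real.exp_pos 1, Real.exp_pos (1 - u)]
  calc _ = 6250 * (Real.exp 1 / u * v) ^ 5 * v ^ 405 := by ring
    _ ≤ 6250 * 9 ^ 5 * (91 / 100) ^ 405 := by gcongr
    _ ≤ 1 / 4 := by norm_num

/-! ### Tail bounds for one gate -/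

/-- Chernoff bound for the upper tail, with the optimal exponential base `u⁻¹`. Here `u` is five
times the density of `Z`, that is, the expected number of hits divided by `D / 5`. -/
theorem card_many_hits_le {D M : ℕ} (hD : D = 2048) (hM : 0 < M) (Z : Finset (Fin D × Fin M)) {u : ℝ}
    (h0 : 0 < u) (h1 : u ≤ 1) (hu : 5 * (Z.card : ℝ) = u * (D * M)) :
    ((univ.filter fun f => 410 ≤ hits Z f).card / Fintype.card (Fin D → Fin M) : ℝ)
      ≤ (u * Real.exp (1 - u)) ^ 410 := by
  have hM' : (0 : ℝ) < M := by exact_mod_cast hM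
  have hD' : (D : ℝ) = 2048 := by exact_mod_cast hD
  have hm := sum_pow_hits_le hM Z (a := u⁻¹) (by positivity)
  have h2 : ((univ.filter fun f => 410 ≤ hits Z f).card : ℝ) * u⁻¹ ^ 410
      ≤ ∑ f, u⁻¹ ^ hits Z f := by
    rw [← nsmul_eq_mul]
    refine (card_nsmul_le_sum _ _ _ ?_).trans
      (sum_le_sum_of_subset_of_nonneg (filter_subset _ _) fun _ _ _ => by positivity)
    intro f hf
    exact pow_le_pow_right₀ ((one_le_inv₀ h0).2 h1) (mem_filter.1 hf).2
  have h3 : (u⁻¹ - 1) * (Z.card : ℝ) / M ≤ 410 * (1 - u) := by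
    have hz : (Z.card : ℝ) = u * (D * M) / 5 := by linarith
    rw [hz]
    have : (u⁻¹ - 1) * (u * (D * M) / 5) / M = D / 5 * (1 - u) := by field_simp
    rw [this, hD']
    nlinarith
  have h4 := h2.trans (hm.trans (mul_le_mul_of_nonneg_left (Real.exp_le_exp.2 h3) (by positivity)))
  have h5 : Real.exp (410 * (1 - u)) = Real.exp (1 - u) ^ 410 := by
    rw [← Real.exp_nat_mul]; norm_num
  have hc : (Fintype.card (Fin D → Fin M) : ℝ) = (M : ℝ) ^ D := by
    rw [Fintype.card_fun, Fintype.card_fin, Fintype.card_fin, Nat.cast_pow]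
  rw [hc, div_le_iff₀ (by positivity), mul_pow]
  rw [h5, inv_pow, ← div_eq_mul_inv, div_le_iff₀ (by positivity)] at h4
  linarith

set_option exponentiation.threshold 1000 in
/-- Chernoff bound for the lower tail, with exponential base `2 / 3`. The form `(1 / 32) ^ 2` suits
the union bound, where it is raised to a power at least `g / 2`. -/
theorem card_few_hits_le {D M : ℕ} (hD : D = 2048) (hM : 0 < M) (Z : Finset (Fin D × Fin M))
    (hZ : 3 / 10 * (D * M) ≤ (Z.card : ℝ)) :
    ((univ.filter fun f => hits Z f ≤ 409).card / Fintype.card (Fin D → Fin M) : ℝ)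
      ≤ (1 / 32) ^ 2 := by
  have hM' : (0 : ℝ) < M := by exact_mod_cast hM
  have hD' : (D : ℝ) = 2048 := by exact_mod_cast hD
  have hm := sum_pow_hits_le hM Z (a := 2 / 3) (by positivity)
  have h2 : ((univ.filter fun f => hits Z f ≤ 409).card : ℝ) * (2 / 3) ^ 409
      ≤ ∑ f, (2 / 3 : ℝ) ^ hits Z f := by
    rw [← nsmul_eq_mul]
    refine (card_nsmul_le_sum _ _ _ ?_).trans
      (sum_le_sum_of_subset_of_nonneg (filter_subset _ _) fun _ _ _ => by positivity)
    intro f hf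
    exact pow_le_pow_of_le_one (by norm_num) (by norm_num) (mem_filter.1 hf).2
  have h3 : ((2 / 3 : ℝ) - 1) * (Z.card : ℝ) / M ≤ -204 := by
    rw [div_le_iff₀ hM']
    rw [hD'] at hZ
    linarith
  have h4 := h2.trans (hm.trans (mul_le_mul_of_nonneg_left (Real.exp_le_exp.2 h3) (by positivity)))
  have h5 : Real.exp (-204) ≤ (2.7⁻¹ : ℝ) ^ 204 := by
    rw [Real.exp_neg, inv_pow]
    have : Real.exp 204 = Real.exp 1 ^ 204 := by rw [← Real.exp_nat_mul]; norm_num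
    rw [this]
    gcongr
    linarith [Real.exp_one_gt_d9]
  have hc : (Fintype.card (Fin D → Fin M) : ℝ) = (M : ℝ) ^ D := by
    rw [Fintype.card_fun, Fintype.card_fin, Fintype.card_fin, Nat.cast_pow]
  have h6 : (2.7⁻¹ : ℝ) ^ 204 ≤ (1 / 32) ^ 2 * (2 / 3) ^ 409 := by norm_num
  rw [hc, div_le_iff₀ (by positivity)]
  have hp : (0 : ℝ) < (M : ℝ) ^ D := by positivity
  have h7 := h4.trans (mul_le_mul_of_nonneg_left (h5.trans h6) hp.le)
  refine le_of_mul_le_mul_right (h7.trans (le_of_eq ?_)) (show (0 : ℝ) < (2 / 3) ^ 409 by positivity)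
  ring

/-! ### Existence of a good layer -/

theorem sum_quarter_pow_le (g : ℕ) : ∑ b ∈ Icc 1 g, (1 / 4 : ℝ) ^ b ≤ 1 / 3 := by
  have : ∑ b ∈ Icc 1 g, (1 / 4 : ℝ) ^ b = (1 - (1 / 4) ^ g) / 3 := by
    induction g with
    | zero => simp
    | succ g ih => rw [sum_Icc_succ_top (by omega), ih]; ring
  rw [this]
  have : (0 : ℝ) < (1 / 4) ^ g := by positivity
  linarith

/-- A choice of wires for which few zeros are reduced by a factor of four, and a density of zeros
of at least `3 / 10` leaves at most 60% of the gates with output `1`. -/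
theorem exists_graph {D M g : ℕ} (hD : D = 2048) (hM : 0 < M) (hg : 2 * g = D * M) :
    ∃ ω : Fin g → Fin D → Fin M,
      (∀ Z, 10 * Z.card ≤ D * M → 4 * (univ.filter fun j => 410 ≤ hits Z (ω j)).card ≤ Z.card) ∧
      (∀ Z, 3 * (D * M) ≤ 10 * Z.card →
        10 * (univ.filter fun j => hits Z (ω j) ≤ 409).card ≤ 6 * g) := by
  classical
  have hN : 2048 ≤ D * M := by rw [hD]; omega
  have hN' : (0 : ℝ) < D * M := by exact_mod_cast (by omega : 0 < D * M)
  have hgN : 2 * (g : ℝ) = D * M := by exact_mod_cast hg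
  have : Nonempty (Fin M) := ⟨⟨0, hM⟩⟩
  let few : Finset (Fin D × Fin M) → Finset (Fin D → Fin M) :=
    fun Z => univ.filter fun f => hits Z f ≤ 409
  let many : Finset (Fin D × Fin M) → Finset (Fin D → Fin M) :=
    fun Z => univ.filter fun f => 410 ≤ hits Z f
  let A : Finset (Fin D × Fin M) × Finset (Fin g) → Finset (Fin D → Fin M) :=
    fun p => if 3 * (D * M) ≤ 10 * p.1.card then few p.1 else many p.1
  let I₁ : Finset (Finset (Fin D × Fin M) × Finset (Fin g)) :=
    univ.filter fun p => 0 < p.2.card ∧ p.1.card = 4 * p.2.card ∧ 100 * p.1.card ≤ 11 * (D * M)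
  let I₂ : Finset (Finset (Fin D × Fin M) × Finset (Fin g)) :=
    univ.filter fun p => 3 * (D * M) ≤ 10 * p.1.card ∧ g ≤ 2 * p.2.card
  let w : Finset (Fin D × Fin M) × Finset (Fin g) → ℝ :=
    fun p => ((A p).card / Fintype.card (Fin D → Fin M) : ℝ) ^ p.2.card
  have hw0 : ∀ p, 0 ≤ w p := fun p => by simp only [w]; positivity
  have hI₁ : ∑ p ∈ I₁, w p ≤ 1 / 3 := by
    refine le_trans ?_ (sum_quarter_pow_le g)
    have hmaps : ∀ p ∈ I₁, p.2.card ∈ Icc 1 g := by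
      intro p hp
      have := (mem_filter.1 hp).2.1
      have h2 := card_le_univ p.2
      rw [Fintype.card_fin] at h2
      exact mem_Icc.2 ⟨this, h2⟩
    rw [← sum_fiberwise_of_maps_to hmaps]
    refine sum_le_sum fun b hb => ?_
    have hb0 : 0 < b := (mem_Icc.1 hb).1
    have hb0' : (0 : ℝ) < b := by exact_mod_cast hb0
    by_cases hbN : 100 * (4 * b) ≤ 11 * (D * M)
    · have hbN' : 100 * (4 * (b : ℝ)) ≤ 11 * (D * M) := by exact_mod_cast hbN
      set u : ℝ := 20 * b / (D * M) with hu
      have hu0 : 0 < u := by positivity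
      have hu1 : u ≤ 11 / 20 := by rw [hu, div_le_iff₀ hN']; linarith
      have hterm : ∀ p ∈ I₁.filter (fun p => p.2.card = b),
          w p ≤ ((u * Real.exp (1 - u)) ^ 410) ^ b := by
        intro p hp
        obtain ⟨hp, hpb⟩ := mem_filter.1 hp
        obtain ⟨-, h1, h2⟩ := (mem_filter.1 hp).2
        have hA : A p = many p.1 := if_neg (by omega)
        simp only [w, hA, hpb, many]
        refine pow_le_pow_left₀ (div_nonneg (Nat.cast_nonneg _) (Nat.cast_nonneg _)) ?_ _
        refine card_many_hits_le hD hM p.1 hu0 (by linarith) ?_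
        rw [h1, hpb, hu]
        push_cast
        field_simp
        ring
      have hcard : (I₁.filter (fun p => p.2.card = b)).card
          ≤ (D * M).choose (4 * b) * g.choose b := by
        have : I₁.filter (fun p => p.2.card = b)
            ⊆ powersetCard (4 * b) univ ×ˢ powersetCard b univ := by
          intro p hp
          obtain ⟨hp, hpb⟩ := mem_filter.1 hp
          obtain ⟨-, h1, h2⟩ := (mem_filter.1 hp).2
          simp [mem_product, mem_powersetCard, hpb, h1]
        simpa [card_product, card_powersetCard] using card_le_card this
      have hc1 : ((D * M).choose (4 * b) : ℝ) ≤ ((5 * Real.exp 1 / u) ^ 4) ^ b := by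
        have := choose_le_exp (D * M) (4 * b) (by omega)
        rw [pow_mul] at this
        refine this.trans (le_of_eq ?_)
        congr 2
        rw [hu]; push_cast; field_simp; ring
      have hc2 : (g.choose b : ℝ) ≤ (10 * Real.exp 1 / u) ^ b := by
        refine (choose_le_exp g b hb0).trans (le_of_eq ?_)
        congr 1
        rw [hu, ← hgN]; field_simp; ring
      calc ∑ p ∈ I₁.filter (fun p => p.2.card = b), w p
          ≤ (I₁.filter (fun p => p.2.card = b)).card • ((u * Real.exp (1 - u)) ^ 410) ^ b :=
            sum_le_card_nsmul _ _ _ hterm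
        _ ≤ (((5 * Real.exp 1 / u) ^ 4) ^ b * (10 * Real.exp 1 / u) ^ b)
              * ((u * Real.exp (1 - u)) ^ 410) ^ b := by
            rw [nsmul_eq_mul]
            refine mul_le_mul_of_nonneg_right ?_ (by positivity)
            calc ((I₁.filter (fun p => p.2.card = b)).card : ℝ)
                ≤ ((D * M).choose (4 * b) : ℝ) * (g.choose b : ℝ) := by exact_mod_cast hcard
              _ ≤ _ := by gcongr
        _ = ((5 * Real.exp 1 / u) ^ 4 * (10 * Real.exp 1 / u)
              * (u * Real.exp (1 - u)) ^ 410) ^ b := by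
            rw [← mul_pow, ← mul_pow]
        _ ≤ (1 / 4) ^ b := pow_le_pow_left₀ (by positivity) (peak_pow_le hu0 hu1) b
    · have : I₁.filter (fun p => p.2.card = b) = ∅ := by
        refine filter_eq_empty_iff.2 fun p hp hpb => hbN ?_
        obtain ⟨-, h1, h2⟩ := (mem_filter.1 hp).2
        rw [← hpb, ← h1]; exact h2
      rw [this, sum_empty]
      positivity
  have hI₂ : ∑ p ∈ I₂, w p ≤ 1 / 4 := by
    have hterm : ∀ p ∈ I₂, w p ≤ (1 / 32) ^ g := by
      intro p hp
      obtain ⟨h1, h2⟩ := (mem_filter.1 hp).2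
      have hA : A p = few p.1 := if_pos h1
      simp only [w, hA, few]
      have h1' : 3 * ((D : ℝ) * M) ≤ 10 * p.1.card := by exact_mod_cast h1
      refine (pow_le_pow_left₀ (div_nonneg (Nat.cast_nonneg _) (Nat.cast_nonneg _))
        (card_few_hits_le hD hM p.1 (by linarith)) _).trans ?_
      rw [← pow_mul]
      exact pow_le_pow_of_le_one (by norm_num) (by norm_num) h2
    have hcard : (I₂.card : ℝ) ≤ 8 ^ g := by
      have h := card_le_univ I₂
      rw [Fintype.card_prod, Fintype.card_finset, Fintype.card_finset, Fintype.card_prod,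
        Fintype.card_fin, Fintype.card_fin, Fintype.card_fin, ← hg, pow_mul, ← mul_pow] at h
      exact_mod_cast h
    calc ∑ p ∈ I₂, w p ≤ I₂.card • (1 / 32 : ℝ) ^ g := sum_le_card_nsmul _ _ _ hterm
      _ ≤ 8 ^ g * (1 / 32) ^ g := by
        rw [nsmul_eq_mul]; exact mul_le_mul_of_nonneg_right hcard (by positivity)
      _ = (1 / 4) ^ g := by rw [← mul_pow]; norm_num
      _ ≤ (1 / 4) ^ 1 := pow_le_pow_of_le_one (by norm_num) (by norm_num) (by omega)
      _ = 1 / 4 := pow_one _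
  have hsum : ∑ p ∈ I₁ ∪ I₂, w p < 1 := by
    have h := sum_union_inter (s₁ := I₁) (s₂ := I₂) (f := w)
    have h' : 0 ≤ ∑ p ∈ I₁ ∩ I₂, w p := sum_nonneg fun p _ => hw0 p
    linarith
  obtain ⟨ω, hω⟩ := exists_avoiding (I₁ ∪ I₂) A (fun p => p.2) hsum
  refine ⟨ω, fun Z hZ => ?_, fun Z hZ => ?_⟩
  · by_contra! hbad
    -- shrink the set of bad gates and enlarge `Z` so that `|Z'| = 4 |B|` holds exactly; this adds
    -- at most `4` elements to `Z`, whence the bound `11 / 100` on the density in `I₁`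
    obtain ⟨B, hBsub, hB⟩ := exists_subset_card_eq
      (show Z.card / 4 + 1 ≤ (univ.filter fun j => 410 ≤ hits Z (ω j)).card by omega)
    obtain ⟨Z', hZZ', hZ'⟩ := exists_superset_card_eq (s := Z) (n := 4 * (Z.card / 4 + 1))
      (by omega) (by rw [Fintype.card_prod, Fintype.card_fin, Fintype.card_fin]; omega)
    obtain ⟨j, hj, hj'⟩ := hω (Z', B) (mem_union_left _ (mem_filter.2 ⟨mem_univ _, by
      refine ⟨?_, ?_, ?_⟩ <;> simp only [hB, hZ'] <;> omega⟩))
    apply hj'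
    have hA : A (Z', B) = many Z' := if_neg (by simp only [hZ']; omega)
    rw [hA]
    refine mem_filter.2 ⟨mem_univ _, (mem_filter.1 (hBsub hj)).2.trans ?_⟩
    exact card_le_card fun t ht => mem_filter.2 ⟨mem_univ _, hZZ' (mem_filter.1 ht).2⟩
  · by_contra! hbad
    obtain ⟨j, hj, hj'⟩ := hω (Z, univ.filter fun j => hits Z (ω j) ≤ 409)
      (mem_union_right _ (mem_filter.2 ⟨mem_univ _, hZ, by simp only; omega⟩))
    apply hj'
    have hA : A (Z, univ.filter fun j => hits Z (ω j) ≤ 409) = few Z := if_pos hZ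
    rw [hA]
    exact mem_filter.2 ⟨mem_univ _, (mem_filter.1 hj).2⟩

/-! ### Counting zeros instead of ones -/

theorem sum_bits_eq (y : ℕ → Bool) (S : Finset ℕ) :
    (∑ i ∈ S, if y i then (1 : ℝ) else 0) = S.card - (S.filter fun i => y i = false).card := by
  have h := card_filter_add_card_filter_not (s := S) (fun i => y i = true)
  simp only [Bool.not_eq_true] at h
  rw [sum_boole, ← h]
  push_cast
  ring

theorem fracOn_eq (y : ℕ → Bool) (W : ℕ) (hW : 0 < W) :
    fracOn y W = 1 - ((range W).filter fun i => y i = false).card / (W : ℝ) := by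
  have : (W : ℝ) ≠ 0 := by positivity
  rw [fracOn, sum_bits_eq, card_range, sub_div, div_self this]

theorem avgOn_ge_iff (y : ℕ → Bool) (S : Finset ℕ) (hS : S.Nonempty) :
    (4 : ℝ) / 5 ≤ avgOn y S ↔ 5 * (S.filter fun i => y i = false).card ≤ S.card := by
  have hS' : (0 : ℝ) < S.card := by exact_mod_cast card_pos.2 hS
  rw [avgOn, sum_bits_eq, le_div_iff₀ hS', ← @Nat.cast_le ℝ]
  push_cast
  constructor <;> intro h <;> linarith

/-- A layer from width `2 ^ (k + 1)` to width `2 ^ k` satisfying both the completeness and the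
soundness step, stated in terms of numbers of zeros. -/
theorem exists_layer (k : ℕ) : ∃ S : ℕ → Finset ℕ,
    (∀ j < 2 ^ k, S j ⊆ range (2 ^ (k + 1)) ∧ (S j).card ≤ 2048) ∧
    (∀ y : ℕ → Bool,
      10 * ((range (2 ^ (k + 1))).filter fun i => y i = false).card ≤ 2 ^ (k + 1) →
      4 * ((range (2 ^ k)).filter fun j => ¬ (4 : ℝ) / 5 ≤ avgOn y (S j)).card
        ≤ ((range (2 ^ (k + 1))).filter fun i => y i = false).card) ∧
    (∀ y : ℕ → Bool,
      3 * 2 ^ (k + 1) ≤ 10 * ((range (2 ^ (k + 1))).filter fun i => y i = false).card →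
      10 * ((range (2 ^ k)).filter fun j => (4 : ℝ) / 5 ≤ avgOn y (S j)).card ≤ 6 * 2 ^ k) := by
  classical
  by_cases hk : k < 10
  -- narrow layers: every gate reads all inputs
  · have hpow : 2 ^ (k + 1) ≤ 2 ^ 10 := Nat.pow_le_pow_right (by norm_num) hk
    have hp : 0 < 2 ^ (k + 1) := by positivity
    refine ⟨fun _ => range (2 ^ (k + 1)), fun j _ => ⟨subset_rfl, ?_⟩, fun y hy => ?_,
      fun y hy => ?_⟩
    · rw [card_range]; omega
    · have : (4 : ℝ) / 5 ≤ avgOn y (range (2 ^ (k + 1))) := by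
        rw [avgOn_ge_iff _ _ (by simp), card_range]; omega
      simp [this]
    · have : ¬ (4 : ℝ) / 5 ≤ avgOn y (range (2 ^ (k + 1))) := by
        rw [avgOn_ge_iff _ _ (by simp), card_range]; omega
      simp [this]
  · obtain ⟨l, rfl⟩ : ∃ l, k = l + 10 := ⟨k - 10, by omega⟩
    -- variables in place of the numeral `2048` and the powers of two, which are costly to unfold
    obtain ⟨D, hD⟩ : ∃ D, D = 2048 := ⟨_, rfl⟩
    obtain ⟨M, hM⟩ : ∃ M, M = 2 ^ l := ⟨_, rfl⟩
    have hM0 : 0 < M := by rw [hM]; positivity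
    have hN : 2 ^ (l + 10 + 1) = D * M := by rw [hD, hM]; ring
    obtain ⟨G, hG⟩ : ∃ G, G = 2 ^ (l + 10) := ⟨_, rfl⟩
    obtain ⟨ω, h1, h2⟩ := exists_graph (g := G) hD hM0 (by rw [← hN, hG]; ring)
    let e : Fin D × Fin M → ℕ := fun p => (finProdFinEquiv p : ℕ)
    have he : Function.Injective e := Fin.val_injective.comp finProdFinEquiv.injective
    have helt : ∀ p, e p < D * M := fun p => (finProdFinEquiv p).isLt
    let S : ℕ → Finset ℕ := fun j =>
      if h : j < G then univ.image fun t => e (t, ω ⟨j, h⟩ t) else ∅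
    let Z : (ℕ → Bool) → Finset (Fin D × Fin M) := fun y => univ.filter fun p => y (e p) = false
    have hZ : ∀ y, (Z y).card = ((range (D * M)).filter fun i => y i = false).card := by
      intro y
      rw [← card_image_of_injective (Z y) he]
      congr 1
      ext i
      simp only [Z, mem_image, mem_filter, mem_univ, true_and, mem_range]
      constructor
      · rintro ⟨p, hp, rfl⟩
        exact ⟨helt p, hp⟩
      · rintro ⟨hi, hy⟩
        have : e (finProdFinEquiv.symm ⟨i, hi⟩) = i := by simp only [e, Equiv.apply_symm_apply]
        exact ⟨_, by rw [this]; exact hy, this⟩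
    have hinj : ∀ j, Function.Injective fun t => e (t, ω j t) :=
      fun j t t' h => congrArg Prod.fst (he h)
    have hS : ∀ j (h : j < G), S j = univ.image fun t => e (t, ω ⟨j, h⟩ t) :=
      fun j h => dif_pos h
    have hScard : ∀ j (h : j < G), (S j).card = D := by
      intro j h
      rw [hS j h, card_image_of_injective _ (hinj _), card_univ, Fintype.card_fin]
    have hgate : ∀ y j (h : j < G),
        (4 : ℝ) / 5 ≤ avgOn y (S j) ↔ hits (Z y) (ω ⟨j, h⟩) ≤ 409 := by
      intro y j h
      have hz : ((S j).filter fun i => y i = false).card = hits (Z y) (ω ⟨j, h⟩) := by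
        rw [hS j h, filter_image, card_image_of_injective _ (hinj _)]
        simp [hits, Z]
      have hne : (S j).Nonempty := card_pos.1 (by rw [hScard j h]; omega)
      rw [avgOn_ge_iff _ _ hne, hz, hScard j h]
      omega
    have hcount : ∀ (P : ℕ → Prop) (Q : Fin G → Prop) [DecidablePred P] [DecidablePred Q],
        (∀ j (h : j < G), P j ↔ Q ⟨j, h⟩) →
        ((range (G)).filter P).card = (univ.filter Q).card := by
      intro P Q _ _ hPQ
      rw [← card_map Fin.valEmbedding]
      congr 1
      ext j
      simp only [mem_filter, mem_range, mem_map, mem_univ, true_and, Fin.valEmbedding_apply]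
      constructor
      · rintro ⟨h, hP⟩
        exact ⟨⟨j, h⟩, (hPQ j h).1 hP, rfl⟩
      · rintro ⟨i, hQ, rfl⟩
        exact ⟨i.isLt, (hPQ i i.isLt).2 hQ⟩
    rw [hN, ← hG]
    refine ⟨S, fun j hj => ⟨?_, by rw [hScard j hj, hD]⟩, fun y hy => ?_, fun y hy => ?_⟩
    · rw [hS j hj]
      intro i hi
      obtain ⟨t, -, rfl⟩ := mem_image.1 hi
      exact mem_range.2 (helt _)
    · rw [← hZ] at hy ⊢
      refine le_trans (le_of_eq (congrArg (4 * ·) ?_)) (h1 (Z y) hy)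
      refine hcount (fun j => ¬ (4 : ℝ) / 5 ≤ avgOn y (S j)) (fun j => 410 ≤ hits (Z y) (ω j)) ?_
      intro j h
      rw [hgate y j h]
      omega
    · rw [← hZ] at hy
      refine le_trans (le_of_eq (congrArg (10 * ·) ?_)) (h2 (Z y) hy)
      refine hcount (fun j => (4 : ℝ) / 5 ≤ avgOn y (S j)) (fun j => hits (Z y) (ω j) ≤ 409) ?_
      intro j h
      rw [hgate y j h]

/-! ### The circuit -/

open Classical in
theorem stmt_5 :
    ∃ C m₀ : ℕ, 0 < C ∧ 0 < m₀ ∧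
      ∀ d : ℕ, 1 ≤ d → ∀ m : ℕ, m = 2 ^ d → m₀ ≤ m →
        ∃ S : ℕ → ℕ → Finset ℕ,
          -- the gates of layer i take inputs from layer i-1 and have fan-in at most C
          (∀ i, 1 ≤ i → i ≤ d → ∀ j < m / 2 ^ i,
            S i j ⊆ Finset.range (m / 2 ^ (i - 1)) ∧ (S i j).card ≤ C) ∧
          -- (a) completeness: boosting the fraction of ones, and the top gate outputs 1
          (∀ x : ℕ → Bool, 9 / 10 ≤ fracOn x m →
            ∀ y : ℕ → ℕ → Bool,
              (∀ j, y 0 j = x j) →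
              (∀ i, 1 ≤ i → i ≤ d → ∀ j < m / 2 ^ i,
                (y i j = true ↔ (4 : ℝ) / 5 ≤ avgOn (y (i - 1)) (S i j))) →
              (∀ i, 1 ≤ i → i ≤ d →
                1 - ((1 : ℝ) / 2) ^ i / 10 ≤ fracOn (y i) (m / 2 ^ i)) ∧
              y d 0 = true) ∧
          -- (b) soundness: layers do not increase a small fraction of ones
          (∀ i, 1 ≤ i → i ≤ d → ∀ y : ℕ → Bool, fracOn y (m / 2 ^ (i - 1)) ≤ 7 / 10 →
            (((Finset.range (m / 2 ^ i)).filter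
                (fun j => (4 : ℝ) / 5 ≤ avgOn y (S i j))).card : ℝ)
              / ((m / 2 ^ i : ℕ) : ℝ) ≤ 6 / 10) := by
  choose L hL1 hL2 hL3 using exists_layer
  refine ⟨2048, 1, by norm_num, one_pos, fun d _ m hm _ => ?_⟩
  have hdiv : ∀ i, i ≤ d → m / 2 ^ i = 2 ^ (d - i) := fun i hi => by
    rw [hm, Nat.pow_div hi (by norm_num)]
  -- layer `i` maps `2 ^ (d - i + 1)` bits to `2 ^ (d - i)` bits
  have hdiv' : ∀ i, 1 ≤ i → i ≤ d → m / 2 ^ (i - 1) = 2 ^ (d - i + 1) := fun i h1 hi => by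
    rw [hdiv _ (by omega)]; congr 1; omega
  refine ⟨fun i => L (d - i), fun i h1 hi j hj => ?_, fun x hx y hy0 hy => ?_,
    fun i h1 hi y hy => ?_⟩
  · rw [hdiv' i h1 hi]
    rw [hdiv i hi] at hj
    exact hL1 _ j hj
  -- at most a fraction `2 ^ (-i) / 10` of zeros on layer `i`, cleared of denominators
  · have key : ∀ i, i ≤ d →
        10 * (2 ^ i * ((range (2 ^ (d - i))).filter fun j => y i j = false).card) ≤ 2 ^ (d - i) := by
      intro i
      induction i with
      | zero =>
        intro _
        have hx' : fracOn (y 0) (2 ^ d) = fracOn x m := by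
          simp only [fracOn, hy0, hm]
        rw [← hx', fracOn_eq _ _ (by positivity), le_sub_comm, div_le_iff₀ (by positivity)] at hx
        have : 10 * (((range (2 ^ d)).filter fun j => y 0 j = false).card : ℝ)
            ≤ ((2 ^ d : ℕ) : ℝ) := by linarith
        simpa using (by exact_mod_cast this :
          10 * ((range (2 ^ d)).filter fun j => y 0 j = false).card ≤ 2 ^ d)
      | succ i ih =>
        intro hi
        have ih := ih (by omega)
        obtain ⟨c, hc⟩ : ∃ c, d = i + 1 + c := ⟨d - (i + 1), by omega⟩
        have e1 : d - i = c + 1 := by omega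
        have e2 : d - (i + 1) = c := by omega
        rw [e1] at ih
        rw [e2]
        have hp : 1 ≤ 2 ^ i := Nat.one_le_two_pow
        have h1 := hL2 c (y i) (le_trans (by nlinarith) ih)
        have h2 : ((range (2 ^ c)).filter fun j => y (i + 1) j = false)
            = (range (2 ^ c)).filter fun j => ¬ (4 : ℝ) / 5 ≤ avgOn (y i) (L c j) := by
          refine filter_congr fun j hj => ?_
          have := hy (i + 1) (by omega) hi j (by rw [hdiv _ hi, e2]; exact mem_range.1 hj)
          simp only [Nat.add_sub_cancel, e2] at this
          rw [← this]
          simp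
        rw [← h2] at h1
        have h3 := Nat.mul_le_mul_left (2 ^ i) h1
        have h4 : (2 : ℕ) ^ (c + 1) = 2 * 2 ^ c := by ring
        rw [pow_succ]
        linarith
    refine ⟨fun i h1 hi => ?_, ?_⟩
    · have h := key i hi
      rw [hdiv i hi, fracOn_eq _ _ (by positivity), sub_le_sub_iff_left,
        div_le_iff₀ (by positivity)]
      have h' : 10 * ((2 : ℝ) ^ i * (((range (2 ^ (d - i))).filter fun j => y i j = false).card : ℝ))
          ≤ ((2 ^ (d - i) : ℕ) : ℝ) := by exact_mod_cast h
      rw [one_div, inv_pow]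
      rw [div_mul_eq_mul_div, le_div_iff₀ (by norm_num), inv_mul_eq_div, le_div_iff₀ (by positivity)]
      linarith
    · by_contra hc
      have h := key d le_rfl
      have hp : 1 ≤ 2 ^ d := Nat.one_le_two_pow
      have : ((range (2 ^ (d - d))).filter fun j => y d j = false).card = 1 := by
        simp at hc
        simp [hc, filter_true_of_mem]
      rw [this, Nat.sub_self] at h
      omega
  · rw [hdiv' i h1 hi, fracOn_eq _ _ (by positivity), sub_le_comm, le_div_iff₀ (by positivity)] at hy
    have h3 : 3 * ((2 ^ (d - i + 1) : ℕ) : ℝ)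
        ≤ 10 * (((range (2 ^ (d - i + 1))).filter fun j => y j = false).card : ℝ) := by linarith
    have h := hL3 (d - i) y (by exact_mod_cast h3)
    have h' : 10 * (((range (2 ^ (d - i))).filter
        fun j => (4 : ℝ) / 5 ≤ avgOn y (L (d - i) j)).card : ℝ) ≤ 6 * ((2 ^ (d - i) : ℕ) : ℝ) := by
      exact_mod_cast h
    rw [hdiv i hi, div_le_iff₀ (by positivity)]
    linarith
end
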